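/- arXiv:2306.01866 — 2 statements merged into one kernel-verified Lean document; each statement's English description precedes it below -/
import Mathlib

section
/- On a hyperkähler manifold with a vector field T preserving the hyperkähler structure and moment maps x_i (dx_i = -ι_T ω_i), the flow of I_1 T preserves the complex symplectic structure (I_1, ω_2 + iω_3): L_{I_1T} ω_2 = 0 and L_{I_1T} ω_3 = 0. -/
noncomputable section
open scoped RealInnerProductSpace

/-- The totally antisymmetric Levi-Civita symbol on `Fin 3`. -/
def eps (i j k : Fin 3) : ℝ :=
  if (i, j, k) = (0, 1, 2) ∨ (i, j, k) = (1, 2, 0) ∨ (i, j, k) = (2, 0, 1) then 1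
  else if (i, j, k) = (0, 2, 1) ∨ (i, j, k) = (2, 1, 0) ∨ (i, j, k) = (1, 0, 2) then -1
  else 0

/-- Lie bracket of vector fields on a normed space (local chart model). -/
def lieB {E : Type*} [NormedAddCommGroup E] [NormedSpace ℝ E]
    (X Y : E → E) (p : E) : E :=
  fderiv ℝ Y p (X p) - fderiv ℝ X p (Y p)

/-- Lie derivative of a covariant 2-tensor `β` along the vector field `X`, evaluated
on vector fields `Y`, `Z` at `p`:
`(L_X β)(Y,Z) = X(β(Y,Z)) - β([X,Y],Z) - β(Y,[X,Z])`. -/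
def lie2Form {E : Type*} [NormedAddCommGroup E] [NormedSpace ℝ E]
    (X : E → E) (β : E → E →L[ℝ] E →L[ℝ] ℝ) (Y Z : E → E) (p : E) : ℝ :=
  fderiv ℝ (fun q => β q (Y q) (Z q)) p (X p)
    - β p (lieB X Y p) (Z p) - β p (Y p) (lieB X Z p)

/-- Exterior derivative of a 2-form `β` at `p`, on the vectors `u`, `v`, `w`. -/
def d2Form {E : Type*} [NormedAddCommGroup E] [NormedSpace ℝ E]
    (β : E → E →L[ℝ] E →L[ℝ] ℝ) (p : E) (u v w : E) : ℝ :=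
  fderiv ℝ β p u v w - fderiv ℝ β p v u w + fderiv ℝ β p w u v

/-- Cartan: a closed two-form with exact contraction by `X` is preserved by `X`. -/
theorem lie2Form_eq_zero_of_exact {E : Type*} [NormedAddCommGroup E] [NormedSpace ℝ E]
    (X : E → E) (β : E → E →L[ℝ] E →L[ℝ] ℝ) (hX : Differentiable ℝ X) (hβ : Differentiable ℝ β)
    (hanti : ∀ p u v, β p u v = - β p v u)
    (hcl : ∀ p u v w, d2Form β p u v w = 0)
    (f : E → ℝ) (hf : ContDiff ℝ (⊤ : ℕ∞) f)
    (hfX : ∀ q v, β q (X q) v = fderiv ℝ f q v)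
    (Y Z : E → E) (hY : Differentiable ℝ Y) (hZ : Differentiable ℝ Z) (p : E) :
    lie2Form X β Y Z p = 0 := by
  have h1 : (fun q => β q (X q)) = fderiv ℝ f := by
    funext q; ext v; exact hfX q v
  have h2 : HasFDerivAt (fun q => β q (X q)) _ p :=
    (hβ p).hasFDerivAt.clm_apply (hX p).hasFDerivAt
  rw [h1] at h2
  have hsymm : IsSymmSndFDerivAt ℝ f p :=
    hf.contDiffAt.isSymmSndFDerivAt (by
      simp only [minSmoothness_of_isRCLikeNormedField]; exact WithTop.coe_le_coe.2 (le_top : (2 : ℕ∞) ≤ ⊤))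
  have h3 := hsymm (Y p) (Z p)
  rw [h2.fderiv] at h3
  have h4 : HasFDerivAt (fun q => β q (Y q) (Z q)) _ p :=
    ((hβ p).hasFDerivAt.clm_apply (hY p).hasFDerivAt).clm_apply (hZ p).hasFDerivAt
  have h5 := hcl p (X p) (Y p) (Z p)
  have h6 := hanti p (Y p) (fderiv ℝ X p (Z p))
  unfold lie2Form lieB
  rw [h4.fderiv]
  unfold d2Form at h5
  simp at h3 ⊢
  linarith

/-- on a hyperkähler manifold with a vector field `T` preserving the
hyperkähler structure and moment maps `x_i` (`dx_i = -ι_T ω_i`), the flow of `I₁ T`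
preserves the complex symplectic structure `(I₁, ω₂ + iω₃)`:
`L_{I₁T} ω₂ = 0` and `L_{I₁T} ω₃ = 0`. -/
theorem stmt6 {E : Type*} [NormedAddCommGroup E] [InnerProductSpace ℝ E]
    -- the hyperkähler metric (in a chart)
    (g : E → E →L[ℝ] E →L[ℝ] ℝ) (hgc : ContDiff ℝ (⊤ : ℕ∞) g)
    (hgsymm : ∀ p u v, g p u v = g p v u)
    -- the three complex structures
    (I : Fin 3 → E → E →L[ℝ] E) (hIc : ∀ i, ContDiff ℝ (⊤ : ℕ∞) (I i))
    (hquat : ∀ i j p (v : E),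
      I i p (I j p v) = (∑ k, eps i j k • I k p v) - (if i = j then v else 0))
    (hskew : ∀ i p (u v : E), g p (I i p u) v = - g p u (I i p v))
    -- the three Kähler forms `ω_i(u,v) = g(I_i u, v)`, each closed (hyperkähler)
    (ω : Fin 3 → E → E →L[ℝ] E →L[ℝ] ℝ)
    (hω : ∀ i p, ω i p = (g p).comp (I i p))
    (hclosed : ∀ i p (u v w : E), d2Form (ω i) p u v w = 0)
    -- the vector field `T` preserves the hyperkähler structure
    (T : E → E) (hTc : ContDiff ℝ (⊤ : ℕ∞) T)
    (hTg : ∀ (Y Z : E → E), ContDiff ℝ (⊤ : ℕ∞) Y → ContDiff ℝ (⊤ : ℕ∞) Z → ∀ p,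
      lie2Form T g Y Z p = 0)
    (hTω : ∀ i (Y Z : E → E), ContDiff ℝ (⊤ : ℕ∞) Y → ContDiff ℝ (⊤ : ℕ∞) Z → ∀ p,
      lie2Form T (ω i) Y Z p = 0)
    -- the moment maps `x_i`
    (x : Fin 3 → E → ℝ) (hxc : ∀ i, ContDiff ℝ (⊤ : ℕ∞) (x i))
    (hdx : ∀ i p (v : E), fderiv ℝ (x i) p v = -(ω i p (T p) v)) :
    ∀ (Y Z : E → E), ContDiff ℝ (⊤ : ℕ∞) Y → ContDiff ℝ (⊤ : ℕ∞) Z → ∀ p,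
      lie2Form (fun q => I 0 q (T q)) (ω 1) Y Z p = 0 ∧
      lie2Form (fun q => I 0 q (T q)) (ω 2) Y Z p = 0 := by
  intro Y Z hY hZ p
  have ht : ((⊤ : ℕ∞) : WithTop ℕ∞) ≠ 0 := by simp
  have hXd : Differentiable ℝ (fun q => I 0 q (T q)) :=
    ((hIc 0).clm_apply hTc).differentiable ht
  have hωd : ∀ i, Differentiable ℝ (ω i) := by
    intro i
    have : ω i = fun q => (g q).comp (I i q) := funext (hω i)
    rw [this]
    exact (hgc.clm_comp (hIc i)).differentiable ht
  have hanti : ∀ i p u v, ω i p u v = - ω i p v u := by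
    intro i p u v
    simp only [hω, ContinuousLinearMap.comp_apply]
    rw [hskew, hgsymm]
  constructor
  · refine lie2Form_eq_zero_of_exact _ (ω 1) hXd (hωd 1) (hanti 1) (hclosed 1) (x 2) (hxc 2) ?_
      Y Z (hY.differentiable ht) (hZ.differentiable ht) p
    intro q v
    rw [hdx]
    simp [hω, hquat, eps, Fin.sum_univ_three]
  · refine lie2Form_eq_zero_of_exact _ (ω 2) hXd (hωd 2) (hanti 2) (hclosed 2)
      (fun q => - x 1 q) (hxc 1).neg ?_
      Y Z (hY.differentiable ht) (hZ.differentiable ht) p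
    intro q v
    rw [fderiv_fun_neg, neg_apply, hdx]
    simp [hω, hquat, eps, Fin.sum_univ_three]
end
end

section
/- Under the ODE system r' = 4x₁, x₁' = F with C⁻¹ r ≤ F ≤ C r (C > 1), r > 0, if x₁(0) = 0 and x₁(τ*) = X > 0, then 0 < r(τ*) - r(0) ≤ 4 X τ* ≤ 4C X² / r(0). -/
/-- for the ODE system `r' = 4x₁`, `x₁' = F` with
`C⁻¹ r ≤ F ≤ C r` (`C > 1`, `r > 0`), if `x₁(0) = 0` and `x₁(τ*) = X > 0` with
`τ* > 0`, then `0 < r(τ*) - r(0) ≤ 4 X τ* ≤ 4 C X² / r(0)`. -/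
theorem stmt12 (C : ℝ) (hC : 1 < C) (r x₁ F : ℝ → ℝ)
    (hr : ∀ τ, 0 < r τ)
    (hFl : ∀ τ, C⁻¹ * r τ ≤ F τ) (hFu : ∀ τ, F τ ≤ C * r τ)
    (hr' : ∀ τ, HasDerivAt r (4 * x₁ τ) τ)
    (hx' : ∀ τ, HasDerivAt x₁ (F τ) τ)
    (τs X : ℝ) (hτs : 0 < τs) (hX : 0 < X)
    (h0 : x₁ 0 = 0) (hXs : x₁ τs = X) :
    0 < r τs - r 0 ∧ r τs - r 0 ≤ 4 * X * τs ∧ 4 * X * τs ≤ 4 * C * X ^ 2 / r 0 := by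
  have hC0 : 0 < C := by linarith
  have hFpos : ∀ τ, 0 < F τ := fun τ =>
    lt_of_lt_of_le (mul_pos (inv_pos.mpr hC0) (hr τ)) (hFl τ)
  have hmono : StrictMono x₁ := by
    apply strictMono_of_deriv_pos
    intro τ
    rw [(hx' τ).deriv]
    exact hFpos τ
  have mvr : ∀ t, 0 < t → ∃ c, 0 < c ∧ c < t ∧ r t - r 0 = 4 * x₁ c * t := by
    intro t ht
    obtain ⟨c, hc, h⟩ := exists_hasDerivAt_eq_slope r (fun τ => 4 * x₁ τ) ht
      (fun τ _ => (hr' τ).continuousAt.continuousWithinAt) (fun τ _ => hr' τ)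
    refine ⟨c, hc.1, hc.2, ?_⟩
    rw [sub_zero, eq_div_iff ht.ne'] at h
    exact h.symm
  have hinc : ∀ t, 0 < t → 0 < r t - r 0 := by
    intro t ht
    obtain ⟨c, hc, _, h⟩ := mvr t ht
    have hxc : 0 < x₁ c := h0 ▸ hmono hc
    rw [h]
    positivity
  refine ⟨hinc τs hτs, ?_, ?_⟩
  · obtain ⟨c, _, hc, h⟩ := mvr τs hτs
    have hxc : x₁ c ≤ X := hXs ▸ (hmono hc).le
    rw [h]
    gcongr
  · obtain ⟨c, hc, h⟩ := exists_hasDerivAt_eq_slope x₁ F hτs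
      (fun τ _ => (hx' τ).continuousAt.continuousWithinAt) (fun τ _ => hx' τ)
    rw [sub_zero, eq_div_iff hτs.ne', h0, hXs, sub_zero] at h
    have h1 : r 0 ≤ C * F c := by
      have h2 := hFl c
      rw [inv_mul_le_iff₀ hC0] at h2
      linarith [hinc c hc.1]
    have h3 : τs * r 0 ≤ C * X := by
      have := mul_le_mul_of_nonneg_left h1 hτs.le
      rw [← h]
      linarith
    rw [le_div_iff₀ (hr 0)]
    have := mul_le_mul_of_nonneg_left h3 hX.le
    nlinarith
end
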